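/- Let F be a finite field with q elements and let d > 1 be an integer. Assume (d, q) ≠ (2, 2), (d, q) ≠ (2, 3), and that d and q − 1 have a common divisor greater than 1. Then there does not exist a surjective group homomorphism from PGL(d, q) onto PSL(d, q). -/

import Mathlib

open Function Matrix

universe u

/-- The projective general linear group `PGL(d, F)`: the quotient of `GL(d, F)` by its
center (the subgroup of scalar matrices). -/
abbrev ProjGL (d : ℕ) (F : Type u) [Field F] : Type u :=
  Matrix.GeneralLinearGroup (Fin d) F ⧸ Subgroup.center (Matrix.GeneralLinearGroup (Fin d) F)

/-!
Write `P = PSL(n, F)` and `G = PGL(n, F)`. By determinants `[G, G] ≤ P`, and `P` is perfect, so a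
surjection `φ : G → P` maps `P` onto `P`; as `P` is simple, `φ` is injective on `P`. The normal
subgroups `ker φ` and `P` of `G` therefore meet trivially, hence commute; but the centralizer of
`P` in `G` is trivial, so `φ` is injective. Thus `G = P`, which by determinants means that every
unit of `F` is an `n`-th power.
-/

open scoped MatrixGroups commutatorElement LinearAlgebra.Projectivization

section GroupTheory

variable {G P Q : Type*} [Group G] [Group P] [Group Q]

lemma injective_of_surjective_of_isSimpleGroup [IsSimpleGroup P] [Nontrivial Q] {f : P →* Q}
    (hf : Surjective f) : Injective f := by
  rw [← f.ker_eq_bot_iff]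
  refine f.normal_ker.eq_bot_or_eq_top.resolve_right fun htop => ?_
  obtain ⟨q, hq⟩ := exists_ne (1 : Q)
  obtain ⟨p, rfl⟩ := hf q
  exact hq (f.mem_ker.1 (htop ▸ Subgroup.mem_top p))

lemma comp_surjective_of_commutator_le_range [Group.IsPerfect Q] {ι : P →* G} {φ : G →* Q}
    (hι : commutator G ≤ ι.range) (hφ : Surjective φ) : Surjective (φ.comp ι) := by
  rw [← MonoidHom.range_eq_top, ← top_le_iff]
  calc ⊤ = ⁅(⊤ : Subgroup Q), ⊤⁆ := Group.IsPerfect.commutator_eq_top.symm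
    _ = (commutator G).map φ := by
      rw [commutator_def, Subgroup.map_commutator, Subgroup.map_top_of_surjective φ hφ]
    _ ≤ ι.range.map φ := Subgroup.map_mono hι
    _ = (φ.comp ι).range := (MonoidHom.range_comp φ ι).symm

lemma injective_of_comp_injective_of_centralizer_range_eq_bot {ι : P →* G} {φ : G →* Q}
    [ι.range.Normal] (hcent : Subgroup.centralizer (ι.range : Set G) = ⊥)
    (hinj : Injective (φ.comp ι)) : Injective φ := by
  have hdisj : Disjoint φ.ker ι.range := by
    rw [Subgroup.disjoint_def]
    rintro _ hker ⟨p, rfl⟩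
    rw [hinj (a₁ := p) (a₂ := 1) (by simpa using hker), map_one]
  rw [← φ.ker_eq_bot_iff, eq_bot_iff, ← hcent, ← Subgroup.commutator_eq_bot_iff_le_centralizer]
  exact Subgroup.commutator_eq_bot_of_disjoint hdisj

lemma centralizer_map_eq_bot_of_ker_eq_center {f : G →* Q} (hf : Surjective f)
    (hker : f.ker = Subgroup.center G) (S : Subgroup G) [Group.IsPerfect S]
    (hS : Subgroup.centralizer (S : Set G) ≤ Subgroup.center G) :
    Subgroup.centralizer (S.map f : Set Q) = ⊥ := by
  -- By the three subgroups lemma, what centralizes `S` modulo the center centralizes `⁅S, S⁆ = S`.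
  let K := (Subgroup.centralizer (S.map f : Set Q)).comap f
  have hKS : ⁅K, S⁆ ≤ Subgroup.center G := by
    rw [Subgroup.commutator_le, ← hker]
    intro g hg s hs
    rw [f.mem_ker, map_commutatorElement, commutatorElement_eq_one_iff_mul_comm]
    exact (Subgroup.mem_centralizer_iff.1 hg _ (Subgroup.mem_map_of_mem f hs)).symm
  have hKSS : ⁅⁅K, S⁆, S⁆ = ⊥ := Subgroup.commutator_eq_bot_iff_le_centralizer.2
    (hKS.trans (Subgroup.center_le_centralizer _))
  have hSK : ⁅⁅S, S⁆, K⁆ = ⊥ := Subgroup.commutator_commutator_eq_bot_of_rotate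
    (by rwa [Subgroup.commutator_comm S K]) hKSS
  rw [Subgroup.commutator_eq_self, Subgroup.commutator_comm,
    Subgroup.commutator_eq_bot_iff_le_centralizer] at hSK
  rw [eq_bot_iff]
  intro q hq
  obtain ⟨g, rfl⟩ := hf q
  rw [Subgroup.mem_bot, ← f.mem_ker, hker]
  exact hS (hSK hq)

lemma exists_forall_pow_ne_of_one_lt_gcd {C : Type*} [CommGroup C] [IsCyclic C] [Finite C] {d : ℕ}
    (hd : 1 < d.gcd (Nat.card C)) : ∃ r : C, ∀ k : C, k ^ d ≠ r := by
  by_contra! hpow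
  have hrange : (powMonoidHom d : C →* C).range = ⊤ := MonoidHom.range_eq_top.2 hpow
  have hindex := IsCyclic.index_powMonoidHom_range (G := C) d
  rw [hrange, Subgroup.index_top, Nat.gcd_comm] at hindex
  exact hd.ne hindex

end GroupTheory

section CommRing

variable {n R : Type*} [Fintype n] [DecidableEq n] [CommRing R]

lemma transvection_smul_apply {i j : n} (hij : i ≠ j) (b : R) (v : n → R) (k : n) :
    (SpecialLinearGroup.transvection hij b • v) k = if k = i then v i + b * v j else v k := by
  rw [Matrix.SpecialLinearGroup.smul_def, SpecialLinearGroup.transvection_coe,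
    Matrix.smul_eq_mulVec, Matrix.add_mulVec, Matrix.one_mulVec, Matrix.single_mulVec_eq]
  split_ifs with hk <;> simp [hk]

lemma specialLinearGroup_ext_smul {A B : SpecialLinearGroup n R}
    (h : ∀ (v : n → R) (k : n), (A • v) k = (B • v) k) : A = B :=
  Subtype.ext (ext_iff_smul.2 fun v => funext (h v))

lemma commutatorElement_transvection_transvection {i j k : n} (hij : i ≠ j) (hik : i ≠ k)
    (hkj : k ≠ j) (a b : R) :
    ⁅SpecialLinearGroup.transvection hik a, SpecialLinearGroup.transvection hkj b⁆ =
      SpecialLinearGroup.transvection hij (a * b) := by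
  rw [commutatorElement_def, mul_inv_eq_iff_eq_mul, mul_inv_eq_iff_eq_mul]
  refine specialLinearGroup_ext_smul fun v l => ?_
  simp only [mul_smul, transvection_smul_apply]
  grind

lemma centralizer_range_toGL_le_center :
    Subgroup.centralizer (SpecialLinearGroup.toGL (n := n) (R := R)).range ≤
      Subgroup.center (GL n R) := by
  intro g hg
  rw [GeneralLinearGroup.mem_center_iff_val_mem_range_scalar]
  refine Matrix.mem_range_scalar_of_commute_transvectionStruct fun t => ?_
  exact congrArg Units.val (Subgroup.mem_centralizer_iff.1 hg
    (SpecialLinearGroup.toGL t.toSpecialLinearGroup) ⟨_, rfl⟩)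

lemma range_toPGL_eq_map_range_toGL :
    (ProjectiveSpecialLinearGroup.toPGL (n := n) (R := R)).range =
      (SpecialLinearGroup.toGL (n := n) (R := R)).range.map ProjGenLinGroup.mk := by
  rw [← MonoidHom.range_comp]
  refine SetLike.coe_injective ?_
  exact QuotientGroup.mk_surjective.range_comp ProjectiveSpecialLinearGroup.toPGL |>.symm

lemma commutator_projGenLinGroup_le_range_toPGL :
    commutator PGL(n, R) ≤ (ProjectiveSpecialLinearGroup.toPGL (n := n) (R := R)).range := by
  have hGL : commutator (GL n R) ≤ (SpecialLinearGroup.toGL (n := n) (R := R)).range := by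
    intro A hA
    have hdet := Abelianization.commutator_subset_ker GeneralLinearGroup.det hA
    exact ⟨⟨A, congrArg Units.val hdet⟩, Units.ext rfl⟩
  rw [range_toPGL_eq_map_range_toGL, commutator_def,
    ← Subgroup.map_top_of_surjective ProjGenLinGroup.mk ProjGenLinGroup.mk_surjective,
    ← Subgroup.map_commutator]
  exact Subgroup.map_mono hGL

lemma centralizer_range_toPGL_eq_bot [Group.IsPerfect (SpecialLinearGroup n R)] :
    Subgroup.centralizer ((ProjectiveSpecialLinearGroup.toPGL (n := n) (R := R)).range :
      Set PGL(n, R)) = ⊥ := by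
  have := Group.IsPerfect.range (SpecialLinearGroup.toGL (n := n) (R := R))
  rw [range_toPGL_eq_map_range_toGL]
  exact centralizer_map_eq_bot_of_ker_eq_center ProjGenLinGroup.mk_surjective
    ProjGenLinGroup.ker_mk _ centralizer_range_toGL_le_center

end CommRing

section Field

variable {n F : Type*} [Fintype n] [DecidableEq n] [Field F]

lemma diag2n_smul_apply {i j : n} (hij : i ≠ j) {a : F} (ha : a ≠ 0) (v : n → F) (k : n) :
    (SpecialLinearGroup.diag2n hij a ha • v) k =
      if k = i then a * v i else if k = j then a⁻¹ * v j else v k := by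
  rw [Matrix.SpecialLinearGroup.smul_def, SpecialLinearGroup.diag2n_coe, Matrix.smul_eq_mulVec,
    mulVec_diagonal]
  grind

lemma commutatorElement_diag2n_transvection {i j : n} (hij : i ≠ j) {a : F} (ha : a ≠ 0) (b : F) :
    ⁅SpecialLinearGroup.diag2n hij a ha, SpecialLinearGroup.transvection hij b⁆ =
      SpecialLinearGroup.transvection hij (b * (a ^ 2 - 1)) := by
  rw [commutatorElement_def, mul_inv_eq_iff_eq_mul, mul_inv_eq_iff_eq_mul]
  refine specialLinearGroup_ext_smul fun v l => ?_
  simp only [mul_smul, transvection_smul_apply, diag2n_smul_apply]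
  grind

lemma diag2n_eq_prod_transvections {i j : n} (hij : i ≠ j) {a : F} (ha : a ≠ 0) :
    SpecialLinearGroup.diag2n hij a ha =
      SpecialLinearGroup.transvection hij a * SpecialLinearGroup.transvection hij.symm (-a⁻¹) *
      SpecialLinearGroup.transvection hij a * SpecialLinearGroup.transvection hij (-1) *
      SpecialLinearGroup.transvection hij.symm 1 * SpecialLinearGroup.transvection hij (-1) := by
  -- The product is `w(a) * w(1)⁻¹`, where `w(a) = e_ij(a) * e_ji(-a⁻¹) * e_ij(a)`.
  refine specialLinearGroup_ext_smul fun v l => ?_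
  simp only [mul_smul, transvection_smul_apply, diag2n_smul_apply]
  grind

theorem specialLinearGroup_eq_top_of_transvection_mem [Nontrivial n]
    {H : Subgroup (SpecialLinearGroup n F)}
    (hH : ∀ (i j : n) (hij : i ≠ j) (b : F), SpecialLinearGroup.transvection hij b ∈ H) :
    H = ⊤ := by
  refine (Subgroup.eq_top_iff' H).2 fun A => ?_
  refine SpecialLinearGroup.diagonal_transvection_induction' (· ∈ H) A (fun i j hij a ha => ?_) hH
    fun _ _ => H.mul_mem
  rw [diag2n_eq_prod_transvections]
  exact mul_mem (mul_mem (mul_mem (mul_mem (mul_mem (hH ..) (hH ..)) (hH ..)) (hH ..)) (hH ..))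
    (hH ..)

theorem specialLinearGroup_isPerfect [Nontrivial n]
    (h : 2 < Fintype.card n ∨ ∃ a : F, a ≠ 0 ∧ a ^ 2 ≠ 1) :
    Group.IsPerfect (SpecialLinearGroup n F) := by
  refine ⟨specialLinearGroup_eq_top_of_transvection_mem fun i j hij b => ?_⟩
  suffices ∃ A B : SpecialLinearGroup n F, ⁅A, B⁆ = SpecialLinearGroup.transvection hij b by
    obtain ⟨A, B, hAB⟩ := this
    exact hAB ▸ Subgroup.commutator_mem_commutator (Subgroup.mem_top A) (Subgroup.mem_top B)
  rcases h with hn | ⟨a, ha, ha2⟩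
  · obtain ⟨k, hki, hkj⟩ := ENat.exists_ne_ne_of_three_le (by simpa using mod_cast hn) i j
    exact ⟨_, _, by rw [commutatorElement_transvection_transvection hij hki.symm hkj b 1, mul_one]⟩
  · refine ⟨_, _, (commutatorElement_diag2n_transvection hij ha (b / (a ^ 2 - 1))).trans ?_⟩
    rw [div_mul_cancel₀ b (sub_ne_zero_of_ne ha2)]

theorem iSup_lineStab_submodule_eq_top [Nontrivial n] :
    ⨆ p : ℙ F (n → F), SpecialLinearGroup.lineStab p.submodule = ⊤ := by
  refine specialLinearGroup_eq_top_of_transvection_mem fun i j hij b => ?_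
  refine Subgroup.mem_iSup_of_mem
    (Projectivization.mk F (Pi.single i 1) (Pi.single_ne_zero_iff.2 one_ne_zero)) ?_
  rw [Projectivization.submodule_mk]
  exact SL2Gen.transvection_mem_lineStab hij b

variable (n F) in
/-- The Iwasawa structure on `PSL(n, F)` acting on projective space that attaches to a point the
image of the group of transvections with that center; it gives the simplicity of `PSL(n, F)`. -/
noncomputable def pslIwasawaStructure [Nontrivial n] :
    MulAction.IwasawaStructure (ProjectiveSpecialLinearGroup n F) (ℙ F (n → F)) where
  T := PSL.iwasawaT
  is_comm p := by
    have : IsMulCommutative (SpecialLinearGroup.lineStab p.submodule) := by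
      rw [Projectivization.submodule_eq]
      exact SpecialLinearGroup.lineStab_isMulCommutative_of_span p.rep p.rep_nonzero
    exact Subgroup.map_isMulCommutative _ _
  is_conj g p := by
    obtain ⟨A, rfl⟩ := QuotientGroup.mk_surjective g
    rw [ProjectiveSpecialLinearGroup.smul_proj_mk, PSL.iwasawaT, PSL.smul_submodule,
      SpecialLinearGroup.lineStab_smul, PSL.iwasawaT_map_conj]
  is_generator := by
    rw [← Subgroup.map_iSup, iSup_lineStab_submodule_eq_top]
    exact Subgroup.map_top_of_surjective _ (QuotientGroup.mk'_surjective _)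

theorem projectiveSpecialLinearGroup_isSimpleGroup [Nontrivial n]
    [Group.IsPerfect (SpecialLinearGroup n F)] :
    IsSimpleGroup (ProjectiveSpecialLinearGroup n F) :=
  (pslIwasawaStructure n F).isSimpleGroup Group.IsPerfect.commutator_eq_top inferInstance

lemma exists_ne_zero_sq_ne_one_of_not_square (hF : Nat.card F ≠ 3) {r : Fˣ}
    (hr : ∀ k : Fˣ, k ^ 2 ≠ r) : ∃ a : F, a ≠ 0 ∧ a ^ 2 ≠ 1 := by
  by_contra! hsq
  have hr1 : (r : F) ≠ 1 := by
    rw [Units.val_eq_one.ne]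
    exact fun h => hr 1 (by rw [one_pow, h])
  have hr_neg : (r : F) = -1 := (sq_eq_one_iff.1 (hsq r r.ne_zero)).resolve_left hr1
  refine hF ?_
  rw [← Set.ncard_univ, Set.ncard_eq_three]
  refine ⟨0, 1, -1, zero_ne_one, (neg_ne_zero.2 one_ne_zero).symm, hr_neg ▸ hr1.symm, ?_⟩
  ext a
  have hsq_a := hsq a
  grind

theorem no_surjection_pgl_to_psl_general [Nontrivial n]
    (hF : ¬(Fintype.card n = 2 ∧ Nat.card F = 3))
    (hpow : ∃ r : Fˣ, ∀ k : Fˣ, k ^ Fintype.card n ≠ r) :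
    ¬∃ φ : PGL(n, F) →* ProjectiveSpecialLinearGroup n F, Surjective φ := by
  rintro ⟨φ, hφ⟩
  obtain ⟨r, hr⟩ := hpow
  have : Group.IsPerfect (SpecialLinearGroup n F) := by
    refine specialLinearGroup_isPerfect
      ((Nat.lt_or_eq_of_le Fintype.one_lt_card).imp_right fun hn => ?_)
    exact exists_ne_zero_sq_ne_one_of_not_square (fun h => hF ⟨hn.symm, h⟩) (hn ▸ hr)
  have := projectiveSpecialLinearGroup_isSimpleGroup (n := n) (F := F)
  have hcomm := commutator_projGenLinGroup_le_range_toPGL (n := n) (R := F)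
  have := Subgroup.Normal.of_commutator_le _ hcomm
  have hsurj := comp_surjective_of_commutator_le_range hcomm hφ
  have hφ_inj : Injective φ := injective_of_comp_injective_of_centralizer_range_eq_bot
    centralizer_range_toPGL_eq_bot (injective_of_surjective_of_isSimpleGroup hsurj)
  have htoPGL : Surjective ProjectiveSpecialLinearGroup.toPGL :=
    Surjective.of_comp_left (f := φ) hsurj hφ_inj
  obtain ⟨k, hk⟩ := ProjectiveSpecialLinearGroup.toPGL_surj_iff.1 htoPGL r
  exact hr k hk

end Field

/-- Let `F` be a finite field with `q` elements and `d > 1` with `(d, q) ≠ (2, 2), (2, 3)` and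
`gcd(d, q - 1) > 1`. Then there is no surjective group homomorphism from `PGL(d, q)` onto
`PSL(d, q)`. -/
theorem no_surjection_pgl_to_psl {F : Type u} [Field F] [Fintype F] (q d : ℕ)
    (hq : Fintype.card F = q) (hd : 1 < d)
    (h22 : ¬(d = 2 ∧ q = 2)) (h23 : ¬(d = 2 ∧ q = 3))
    (hgcd : 1 < Nat.gcd d (q - 1)) :
    ¬∃ φ : ProjGL d F →* Matrix.ProjectiveSpecialLinearGroup (Fin d) F,
      Surjective φ := by
  have : Nontrivial (Fin d) := Fin.nontrivial_iff_two_le.2 hd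
  have hunits : Nat.card Fˣ = q - 1 := by
    rw [Nat.card_units, Nat.card_eq_fintype_card, hq]
  have hpow : ∃ r : Fˣ, ∀ k : Fˣ, k ^ d ≠ r := exists_forall_pow_ne_of_one_lt_gcd (hunits ▸ hgcd)
  exact no_surjection_pgl_to_psl_general (n := Fin d) (by simpa [hq] using h23)
    (by simpa using hpow)
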